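/- Let P be a Gorenstein polytope of dimension d and degree s. If d ≥ 2s, then P is isomorphic to a Cayley polytope P_1 * ⋯ * P_l of lattice polytopes P_1, …, P_l ⊂ ℝ^n with n ≤ 2s−1. -/

import Mathlib

open Pointwise

/-- A point of `ℝ^d` is a lattice point if all its coordinates are integers. -/
def IsLatticePt {d : ℕ} (x : Fin d → ℝ) : Prop := ∀ i, ∃ z : ℤ, x i = (z : ℝ)

/-- A lattice polytope is the (non-empty) convex hull of finitely many lattice points. -/
def IsLatticePolytope {d : ℕ} (P : Set (Fin d → ℝ)) : Prop :=
  ∃ V : Finset (Fin d → ℝ), V.Nonempty ∧ (∀ v ∈ V, IsLatticePt v) ∧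
    P = convexHull ℝ (V : Set (Fin d → ℝ))

/-- The dimension of a polytope: the dimension of the direction of its affine hull. -/
noncomputable def polyDim {d : ℕ} (P : Set (Fin d → ℝ)) : ℕ :=
  Module.finrank ℝ (affineSpan ℝ P).direction

/-- A polytope is hollow if its relative interior contains no lattice point. -/
def IsHollow {d : ℕ} (P : Set (Fin d → ℝ)) : Prop :=
  ∀ x ∈ intrinsicInterior ℝ P, ¬ IsLatticePt x

/-- A facet of `P`: a non-empty exposed face of dimension `dim P - 1`. -/
def IsFacet {d : ℕ} (P F : Set (Fin d → ℝ)) : Prop :=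
  IsExposed ℝ P F ∧ F.Nonempty ∧ polyDim F + 1 = polyDim P

/-- An affine functional is integral on `P` if it takes integer values on all
lattice points of the affine hull of `P`. -/
def IsIntegralOn {d : ℕ} (P : Set (Fin d → ℝ)) (u : (Fin d → ℝ) →ᵃ[ℝ] ℝ) : Prop :=
  ∀ y ∈ affineSpan ℝ P, IsLatticePt y → ∃ z : ℤ, u y = (z : ℝ)

/-- `P` is reflexive: there is a lattice point `x` in the relative interior of `P`
such that every facet of `P` has lattice distance one from `x`, i.e. for every facet `F`
there is an integral affine functional that is constant on `F` and exceeds its value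
at `x` by exactly `1`. -/
def IsReflexivePolytope {d : ℕ} (P : Set (Fin d → ℝ)) : Prop :=
  ∃ x ∈ intrinsicInterior ℝ P, IsLatticePt x ∧
    ∀ F : Set (Fin d → ℝ), IsFacet P F →
      ∃ u : (Fin d → ℝ) →ᵃ[ℝ] ℝ, IsIntegralOn P u ∧ ∀ f ∈ F, u f = u x + 1

/-- `P` is Gorenstein if some positive integer multiple `r • P` is reflexive. -/
def IsGorenstein {d : ℕ} (P : Set (Fin d → ℝ)) : Prop :=
  ∃ r : ℕ, 0 < r ∧ IsReflexivePolytope ((r : ℝ) • P)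

/-- `P` is Gorenstein of codegree `r` if `r • P` is reflexive (`r` positive). -/
def IsGorensteinOfCodeg {d : ℕ} (P : Set (Fin d → ℝ)) (r : ℕ) : Prop :=
  0 < r ∧ IsReflexivePolytope ((r : ℝ) • P)

/-- The codegree of `P`: the smallest positive integer `r` such that `r • P` is not hollow. -/
noncomputable def polyCodeg {d : ℕ} (P : Set (Fin d → ℝ)) : ℕ :=
  sInf {r : ℕ | 0 < r ∧ ¬ IsHollow ((r : ℝ) • P)}

/-- The degree of `P`: `dim P + 1 - codeg P`. -/
noncomputable def polyDeg {d : ℕ} (P : Set (Fin d → ℝ)) : ℕ :=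
  polyDim P + 1 - polyCodeg P

/-- Unimodular equivalence of lattice polytopes: an affine map carrying `P` onto `Q`,
with an affine inverse on affine hulls, such that both maps preserve lattice points of
the affine hulls. -/
def LatticeIso {d e : ℕ} (P : Set (Fin d → ℝ)) (Q : Set (Fin e → ℝ)) : Prop :=
  ∃ (f : (Fin d → ℝ) →ᵃ[ℝ] (Fin e → ℝ)) (g : (Fin e → ℝ) →ᵃ[ℝ] (Fin d → ℝ)),
    f '' P = Q ∧ g '' Q = P ∧
    (∀ x ∈ affineSpan ℝ P, g (f x) = x) ∧ (∀ y ∈ affineSpan ℝ Q, f (g y) = y) ∧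
    (∀ x ∈ affineSpan ℝ P, IsLatticePt x → IsLatticePt (f x)) ∧
    (∀ y ∈ affineSpan ℝ Q, IsLatticePt y → IsLatticePt (g y))

/-- The lattice pyramid `conv(P' × {0}, (0,1))` over `P' ⊆ ℝ^m`. -/
def pyramidOver {m : ℕ} (P' : Set (Fin m → ℝ)) : Set (Fin (m + 1) → ℝ) :=
  convexHull ℝ ((fun x => Fin.snoc x (0 : ℝ)) '' P' ∪ {Fin.snoc (0 : Fin m → ℝ) (1 : ℝ)})

/-- `P` is a lattice pyramid if it is a single lattice point or is isomorphic to a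
lattice pyramid over a lattice polytope. -/
def IsLatticePyramid {d : ℕ} (P : Set (Fin d → ℝ)) : Prop :=
  (∃ x : Fin d → ℝ, IsLatticePt x ∧ P = {x}) ∨
  ∃ (m : ℕ) (P' : Set (Fin m → ℝ)), IsLatticePolytope P' ∧ LatticeIso P (pyramidOver P')

/-- The Cayley polytope `P_1 * ⋯ * P_l ⊆ ℝ^{n+l}` of `P_1, …, P_l ⊆ ℝ^n`:
the convex hull of the sets `P_i × {e_i}`. -/
def cayley {n l : ℕ} (P : Fin l → Set (Fin n → ℝ)) : Set (Fin (n + l) → ℝ) :=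
  convexHull ℝ (⋃ i : Fin l, (fun x => Fin.append x (Pi.single i (1 : ℝ))) '' P i)

/-- The Cayley polytope `F * G ⊆ ℝ^{n+2}` of two polytopes `F, G ⊆ ℝ^n`. -/
def cayleyTwo {n : ℕ} (F G : Set (Fin n → ℝ)) : Set (Fin (n + 2) → ℝ) :=
  convexHull ℝ
    ((fun x => Fin.append x ![(1 : ℝ), 0]) '' F ∪ (fun x => Fin.append x ![(0 : ℝ), 1]) '' G)

/-- `P` is a Cayley join of `F` and `G` if `P ≅ F * G` and `dim F + dim G = dim P - 1`. -/
def IsCayleyJoin {d n : ℕ} (P : Set (Fin d → ℝ)) (F G : Set (Fin n → ℝ)) : Prop :=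
  LatticeIso P (cayleyTwo F G) ∧ polyDim F + polyDim G + 1 = polyDim P

/-- `P` is reducible with factors `F` and `G`: a Cayley join with
`codeg F + codeg G = codeg P`. -/
def IsReducibleWith {d n : ℕ} (P : Set (Fin d → ℝ)) (F G : Set (Fin n → ℝ)) : Prop :=
  IsCayleyJoin P F G ∧ polyCodeg F + polyCodeg G = polyCodeg P

/-- `P` is reducible: it is a single lattice point (by convention) or is reducible
with some factors `F` and `G` which are lattice polytopes. -/
def IsReducible {d : ℕ} (P : Set (Fin d → ℝ)) : Prop :=
  (∃ x : Fin d → ℝ, IsLatticePt x ∧ P = {x}) ∨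
  ∃ (n : ℕ) (F G : Set (Fin n → ℝ)), IsLatticePolytope F ∧ IsLatticePolytope G ∧
    IsReducibleWith P F G

/-- `P` is a Cayley polytope: a single lattice point, or isomorphic to a Cayley polytope
of `l > 1` lattice polytopes. -/
def IsCayleyPolytope {d : ℕ} (P : Set (Fin d → ℝ)) : Prop :=
  (∃ x : Fin d → ℝ, IsLatticePt x ∧ P = {x}) ∨
  ∃ (n l : ℕ) (Q : Fin l → Set (Fin n → ℝ)), 1 < l ∧ (∀ i, IsLatticePolytope (Q i)) ∧
    LatticeIso P (cayley Q)

/-- `P` is IDP if for every `k ≥ 2` every lattice point of `k • P` is a sum of `k`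
lattice points of `P`. -/
def IsIDP {d : ℕ} (P : Set (Fin d → ℝ)) : Prop :=
  ∀ k : ℕ, 2 ≤ k → ∀ x : Fin d → ℝ, IsLatticePt x → x ∈ (k : ℝ) • P →
    ∃ p : Fin k → (Fin d → ℝ), (∀ i, p i ∈ P ∧ IsLatticePt (p i)) ∧ x = ∑ i, p i

/-- The standard simplex `Δ_s = conv(0, e_1, …, e_s) ⊆ ℝ^s`. -/
def stdSimplexLP (s : ℕ) : Set (Fin s → ℝ) :=
  convexHull ℝ (insert 0 (Set.range fun i : Fin s => Pi.single i (1 : ℝ)))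

/-- The product of `F ⊆ ℝ^m` and `G ⊆ ℝ^n` inside `ℝ^{m+n}`. -/
def prodPoly {m n : ℕ} (F : Set (Fin m → ℝ)) (G : Set (Fin n → ℝ)) : Set (Fin (m + n) → ℝ) :=
  (fun p : (Fin m → ℝ) × (Fin n → ℝ) => Fin.append p.1 p.2) '' (F ×ˢ G)

/-- The free join `conv(F × 0 × {0} ∪ 0 × G × {1}) ⊆ ℝ^m × ℝ^n × ℝ`. -/
def freeJoin {m n : ℕ} (F : Set (Fin m → ℝ)) (G : Set (Fin n → ℝ)) :
    Set (Fin (m + n + 1) → ℝ) :=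
  convexHull ℝ
    ((fun x => Fin.snoc (Fin.append x (0 : Fin n → ℝ)) (0 : ℝ)) '' F ∪
     (fun y => Fin.snoc (Fin.append (0 : Fin m → ℝ) y) (1 : ℝ)) '' G)

/-
Let `r • P` be reflexive and write `1` for the constant functional. The cone of affine functionals
that are non-negative on `P` is generated by its elementary vectors, the facet functionals, which
are scaled by a fixed weight `w` on the vertices of `P`. The weights represent the interior lattice
point of `r • P` and have total `r`, so reflexivity makes the scaled facet functionals `z_t`
integral. Write `1 = ∑ a_t z_t` with `a_t > 0` and at most `d + 1` linearly independent `z_t`. The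
functional `∑ (1 - {a_t}) z_t` is integral and positive on the vertices, hence at least `1` there;
pairing with `w` gives `2r ≤ ∑ ⌊a_t⌋ + d + 1`. Taking `⌊a_t⌋` copies of each `z_t`, and the integral
remainder `∑ {a_t} z_t` if it is non-zero, splits `1` into integral, non-negative, non-zero
summands; there are exactly `r` of them if the remainder vanishes and at least `2r - d` otherwise.
As `r` is at least the codegree `d + 1 - s`, this is at least `d + 2 - 2s` in either case (`d + 1`
if `s = 0`). Each vertex of `P` is sent by these summands to a unit vector, and so they exhibit
`P` as a Cayley polytope. Its factors live in the common kernel of the linear parts, of dimension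
at most `2s - 1` (`0` if `s = 0`).
-/

section Elementary

variable {K ι : Type*} [Field K]

/-- An elementary vector of a subspace `E` of `K^ι` (in the sense of Rockafellar): a non-zero
element whose support is minimal, i.e. an element of `E` determined up to a scalar by its zeros. -/
def IsElementary (E : Submodule K (ι → K)) (φ : ι → K) : Prop :=
  φ ∈ E ∧ φ ≠ 0 ∧ ∀ ψ ∈ E, (∀ i, φ i = 0 → ψ i = 0) → ∃ c : K, ψ = c • φ

lemma IsElementary.finrank_map_funLeft_add_one {E : Submodule K (ι → K)} [FiniteDimensional K E]
    {φ : ι → K} (hφ : IsElementary E φ) :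
    Module.finrank K (E.map (LinearMap.funLeft K K ((↑) : {i // φ i = 0} → ι))) + 1 =
      Module.finrank K E := by
  obtain ⟨hφE, hφ0, hmin⟩ := hφ
  set ρ := (LinearMap.funLeft K K ((↑) : {i // φ i = 0} → ι)).domRestrict E
  have hker : LinearMap.ker ρ = Submodule.span K {(⟨φ, hφE⟩ : E)} := by
    refine le_antisymm (fun ψ hψ => ?_) ?_
    · obtain ⟨c, hc⟩ := hmin ψ ψ.2 fun i hi => congrFun hψ ⟨i, hi⟩
      exact Submodule.mem_span_singleton.2 ⟨c, Subtype.ext hc.symm⟩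
    · rw [Submodule.span_singleton_le_iff_mem, LinearMap.mem_ker]
      exact funext fun i => i.2
  have hφ0' : (⟨φ, hφE⟩ : E) ≠ 0 := fun h => hφ0 (congrArg Subtype.val h)
  rw [← LinearMap.range_domRestrict, ← LinearMap.finrank_range_add_finrank_ker ρ, hker,
    finrank_span_singleton hφ0']

end Elementary

section WeightedSlice

universe u

variable {ι : Type u} [Fintype ι] {E : Submodule ℝ (ι → ℝ)} {w φ ψ : ι → ℝ}

/-- The slice `w ⬝ φ = 1` of the cone of non-negative vectors of `E`. For `E` the space of
restrictions of affine functionals to the vertices of a polytope, this cone is the dual of the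
cone over the polytope, and its elementary vectors are the facet functionals. -/
def weightedSlice (E : Submodule ℝ (ι → ℝ)) (w : ι → ℝ) : Set (ι → ℝ) :=
  {φ | φ ∈ E ∧ 0 ≤ φ ∧ w ⬝ᵥ φ = 1}

lemma convex_weightedSlice : Convex ℝ (weightedSlice E w) := by
  rintro φ ⟨hφE, hφ0, hφ1⟩ ψ ⟨hψE, hψ0, hψ1⟩ a b ha hb hab
  refine ⟨E.add_mem (E.smul_mem a hφE) (E.smul_mem b hψE),
    add_nonneg (smul_nonneg ha hφ0) (smul_nonneg hb hψ0), ?_⟩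
  rw [dotProduct_add, dotProduct_smul, dotProduct_smul, hφ1, hψ1, smul_eq_mul, smul_eq_mul,
    mul_one, mul_one, hab]

lemma isCompact_weightedSlice (hw : ∀ i, 0 < w i) : IsCompact (weightedSlice E w) := by
  have hclosed : IsClosed (weightedSlice E w) :=
    E.closed_of_finiteDimensional.inter <| (isClosed_le continuous_const continuous_id).inter <|
      isClosed_eq (continuous_const.dotProduct continuous_id) continuous_const
  refine (isCompact_Icc (a := (0 : ι → ℝ)) (b := fun i => (w i)⁻¹)).of_isClosed_subset hclosed ?_
  rintro φ ⟨-, hφ0, hφ1⟩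
  refine ⟨hφ0, fun i => ?_⟩
  have hle : w i * φ i ≤ w ⬝ᵥ φ :=
    Finset.single_le_sum (f := fun j => w j * φ j) (fun j _ => mul_nonneg (hw j).le (hφ0 j))
      (Finset.mem_univ i)
  rw [hφ1] at hle
  exact (le_inv_mul_iff₀ (hw i)).2 hle |>.trans_eq (mul_one _)

lemma isElementary_of_mem_extremePoints_weightedSlice
    (hφ : φ ∈ (weightedSlice E w).extremePoints ℝ) : IsElementary E φ := by
  obtain ⟨⟨hφE, hφ0, hφ1⟩, hext⟩ := mem_extremePoints_iff_left.1 hφ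
  refine ⟨hφE, by rintro rfl; simp at hφ1, fun ψ hψE hψ => ⟨w ⬝ᵥ ψ, ?_⟩⟩
  set η := ψ - (w ⬝ᵥ ψ) • φ with hη
  have hηE : η ∈ E := E.sub_mem hψE (E.smul_mem _ hφE)
  have hη0 (i) (hi : φ i = 0) : η i = 0 := by simp [hη, hi, hψ i hi]
  have hηw : w ⬝ᵥ η = 0 := by simp [hη, dotProduct_sub, hφ1]
  obtain ⟨ε, hε0, hε⟩ : ∃ ε > 0, ∀ i, ε * |η i| ≤ φ i := by
    have hlim (i) : ∀ᶠ ε in nhdsWithin (0 : ℝ) (Set.Ioi 0), ε * |η i| ≤ φ i := by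
      rcases (hφ0 i).eq_or_lt with hi | hi
      · simp [hη0 i hi.symm, ← hi]
      · have : Filter.Tendsto (fun ε : ℝ => ε * |η i|) (nhdsWithin 0 (Set.Ioi 0)) (nhds 0) :=
          tendsto_nhdsWithin_of_tendsto_nhds <| by
            simpa using (Filter.tendsto_id (x := nhds (0 : ℝ))).mul_const |η i|
        exact (this.eventually (gt_mem_nhds hi)).mono fun _ => le_of_lt
    obtain ⟨ε, hε, hε0⟩ := ((Filter.eventually_all.2 hlim).and self_mem_nhdsWithin).exists
    exact ⟨ε, hε0, hε⟩
  have hmem (σ : ℝ) (hσ : |σ| = ε) : φ + σ • η ∈ weightedSlice E w := by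
    refine ⟨E.add_mem hφE (E.smul_mem σ hηE), fun i => ?_, by simp [hφ1, hηw]⟩
    have := (neg_le_abs (σ * η i)).trans_eq (abs_mul σ (η i))
    have := hε i
    simp only [Pi.zero_apply, Pi.add_apply, Pi.smul_apply, smul_eq_mul]
    rw [hσ] at *
    linarith
  have hseg : φ ∈ openSegment ℝ (φ + ε • η) (φ + (-ε) • η) :=
    ⟨1 / 2, 1 / 2, by norm_num, by norm_num, by norm_num, by module⟩
  have hfix := hext _ (hmem ε (abs_of_pos hε0)) _ (hmem (-ε) (by simp [abs_of_pos hε0])) hseg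
  have : η = 0 := by simpa [hε0.ne'] using hfix
  exact sub_eq_zero.1 this

lemma finite_weightedSlice_inter_isElementary :
    {φ ∈ weightedSlice E w | IsElementary E φ}.Finite := by
  refine Set.Finite.of_injOn (f := fun φ => {i | φ i = 0}) (t := Set.univ)
    (fun _ _ => Set.mem_univ _) ?_ Set.finite_univ
  rintro φ ⟨⟨-, -, hφ1⟩, -, -, hφ⟩ ψ ⟨⟨hψE, -, hψ1⟩, -⟩ hzero
  obtain ⟨c, rfl⟩ := hφ ψ hψE fun i hi => (Set.ext_iff.1 hzero i).1 hi
  have hc : c = 1 := by simpa [hφ1] using hψ1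
  rw [hc, one_smul]

lemma convexHull_isElementary_weightedSlice (hw : ∀ i, 0 < w i) :
    convexHull ℝ {φ ∈ weightedSlice E w | IsElementary E φ} = weightedSlice E w := by
  refine (convexHull_min (Set.sep_subset _ _) convex_weightedSlice).antisymm ?_
  calc weightedSlice E w
      = closure (convexHull ℝ ((weightedSlice E w).extremePoints ℝ)) :=
        (closure_convexHull_extremePoints (isCompact_weightedSlice hw) convex_weightedSlice).symm
    _ ⊆ closure (convexHull ℝ {φ ∈ weightedSlice E w | IsElementary E φ}) :=
        closure_mono <| convexHull_mono fun φ hφ =>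
          ⟨hφ.1, isElementary_of_mem_extremePoints_weightedSlice hφ⟩
    _ = convexHull ℝ {φ ∈ weightedSlice E w | IsElementary E φ} :=
        (finite_weightedSlice_inter_isElementary.isClosed_convexHull ℝ).closure_eq

lemma exists_linearIndependent_sum_smul_isElementary (hw : ∀ i, 0 < w i) (hφE : φ ∈ E)
    (hφ : 0 < φ) :
    ∃ (τ : Type u) (_ : Fintype τ) (z : τ → ι → ℝ) (a : τ → ℝ), LinearIndependent ℝ z ∧
      (∀ t, z t ∈ weightedSlice E w ∧ IsElementary E (z t)) ∧ (∀ t, 0 < a t) ∧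
      ∑ t, a t • z t = φ := by
  have hpos : 0 < w ⬝ᵥ φ := by
    obtain ⟨hφ0, i, hi⟩ := Pi.lt_def.1 hφ
    exact Finset.sum_pos' (fun j _ => mul_nonneg (hw j).le (hφ0 j))
      ⟨i, Finset.mem_univ i, mul_pos (hw i) hi⟩
  have hmem : (w ⬝ᵥ φ)⁻¹ • φ ∈ weightedSlice E w :=
    ⟨E.smul_mem _ hφE, smul_nonneg (inv_nonneg.2 hpos.le) hφ.le, by simp [hpos.ne']⟩
  rw [← convexHull_isElementary_weightedSlice hw] at hmem
  obtain ⟨τ, _, z, b, hz, hind, hb, -, hsum⟩ := eq_pos_convex_span_of_mem_convexHull hmem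
  have hz' (t) : z t ∈ weightedSlice E w ∧ IsElementary E (z t) := hz ⟨t, rfl⟩
  refine ⟨τ, inferInstance, z, fun t => (w ⬝ᵥ φ) * b t, ?_, hz', fun t => mul_pos hpos (hb t), ?_⟩
  · refine linearIndependent_iff'.2 fun s g hg => affineIndependent_iff.1 hind s g ?_ hg
    simpa [dotProduct_sum, fun t => (hz' t).1.2.2] using congrArg (w ⬝ᵥ ·) hg
  · simp_rw [mul_smul, ← Finset.smul_sum, hsum, smul_inv_smul₀ hpos.ne']

end WeightedSlice

section Rounding

variable {ι τ : Type*} [Fintype ι] [Fintype τ] {w : ι → ℝ} {I : AddSubgroup (ι → ℝ)}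
  {z : τ → ι → ℝ} {a : τ → ℝ}

lemma dotProduct_sum_nsmul_of_dotProduct_eq_one (hwz : ∀ t, w ⬝ᵥ z t = 1) (n : τ → ℕ) :
    w ⬝ᵥ ∑ t, n t • z t = ((∑ t, n t : ℕ) : ℝ) := by
  simp_rw [dotProduct_sum, ← Nat.cast_smul_eq_nsmul ℝ, dotProduct_smul, hwz, smul_eq_mul, mul_one,
    Nat.cast_sum]

lemma two_mul_sum_le_sum_floor_add_card (hw : 0 ≤ w) (hI : ∀ φ ∈ I, ∀ i, ∃ m : ℤ, φ i = m)
    (h1 : 1 ∈ I) (hzI : ∀ t, z t ∈ I) (hz : ∀ t, 0 ≤ z t) (hwz : ∀ t, w ⬝ᵥ z t = 1)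
    (hsum : ∑ t, a t • z t = 1) :
    2 * ∑ i, w i ≤ ((∑ t, ⌊a t⌋₊ : ℕ) : ℝ) + Fintype.card τ := by
  set ψ : ι → ℝ := ∑ t, z t - (1 - ∑ t, ⌊a t⌋₊ • z t) with hψ
  have hψI : ψ ∈ I := I.sub_mem (I.sum_mem fun t _ => hzI t)
    (I.sub_mem h1 (I.sum_mem fun t _ => I.nsmul_mem (hzI t) _))
  have hψ_eq (i) : ψ i = ∑ t, (1 - (a t - ⌊a t⌋₊)) * z t i := by
    rw [hψ, ← hsum, ← Finset.sum_sub_distrib, ← Finset.sum_sub_distrib, Finset.sum_apply]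
    refine Finset.sum_congr rfl fun t _ => ?_
    simp only [← Nat.cast_smul_eq_nsmul ℝ, Pi.sub_apply, Pi.smul_apply, smul_eq_mul]
    ring
  have hfract (t) : 0 < 1 - (a t - ⌊a t⌋₊) := by linarith [Nat.lt_floor_add_one (a t)]
  have hψ_pos (i) : 0 < ψ i := by
    obtain ⟨t, -, ht⟩ : ∃ t ∈ Finset.univ, a t * z t i ≠ 0 := by
      refine Finset.exists_ne_zero_of_sum_ne_zero ?_
      have : ∑ t, a t * z t i = 1 := by simpa using congrFun hsum i
      exact this ▸ one_ne_zero
    rw [hψ_eq]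
    exact Finset.sum_pos' (fun t _ => mul_nonneg (hfract t).le (hz t i))
      ⟨t, Finset.mem_univ t, mul_pos (hfract t) ((hz t i).lt_of_ne' (right_ne_zero_of_mul ht))⟩
  have hψ_one : 1 ≤ ψ := fun i => by
    obtain ⟨m, hm⟩ := hI ψ hψI i
    have hm0 : (0 : ℝ) < m := hm ▸ hψ_pos i
    have hm1 : (1 : ℝ) ≤ m := by exact_mod_cast Int.cast_pos.1 hm0
    exact hm1.trans_eq hm.symm
  have hw1 : w ⬝ᵥ 1 ≤ w ⬝ᵥ ψ := dotProduct_le_dotProduct_of_nonneg_left hψ_one hw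
  rw [hψ, dotProduct_sub, dotProduct_sub, dotProduct_sum_nsmul_of_dotProduct_eq_one hwz,
    dotProduct_sum, Finset.sum_congr rfl fun t _ => hwz t, dotProduct_one] at hw1
  simp only [Finset.sum_const, Finset.card_univ, nsmul_eq_mul, mul_one] at hw1
  linarith

lemma exists_multiset_sum_eq_one_of_sum_smul_eq_one {r : ℕ} (hr : ∑ i, w i = r)
    (h1 : 1 ∈ I) (hzI : ∀ t, z t ∈ I) (hz : ∀ t, 0 < z t) (hwz : ∀ t, w ⬝ᵥ z t = 1)
    (ha : ∀ t, 0 ≤ a t) (hsum : ∑ t, a t • z t = 1) :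
    ∃ M : Multiset (ι → ℝ), (∀ φ ∈ M, φ ∈ I ∧ 0 < φ) ∧ M.sum = 1 ∧
      (M.card = r ∨ M.card = ∑ t, ⌊a t⌋₊ + 1) := by
  set M : Multiset (ι → ℝ) := ∑ t, Multiset.replicate ⌊a t⌋₊ (z t) with hM
  have hM_mem : ∀ φ ∈ M, φ ∈ I ∧ 0 < φ := fun φ hφ => by
    obtain ⟨t, -, ht⟩ := Multiset.mem_sum.1 hφ
    rw [Multiset.eq_of_mem_replicate ht]
    exact ⟨hzI t, hz t⟩
  have hM_sum : M.sum = ∑ t, ⌊a t⌋₊ • z t := by simp [hM, Multiset.sum_sum]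
  have hM_card : M.card = ∑ t, ⌊a t⌋₊ := by simp [hM]
  have hM_le : M.sum ≤ 1 := by
    rw [hM_sum, ← hsum]
    refine Finset.sum_le_sum fun t _ => ?_
    rw [← Nat.cast_smul_eq_nsmul ℝ]
    exact smul_le_smul_of_nonneg_right (Nat.floor_le (ha t)) (hz t).le
  rcases hM_le.eq_or_lt with h | h
  · refine ⟨M, hM_mem, h, Or.inl ?_⟩
    have hw1 := dotProduct_sum_nsmul_of_dotProduct_eq_one hwz fun t => ⌊a t⌋₊
    rw [← hM_sum, h, dotProduct_one, hr, Nat.cast_inj] at hw1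
    exact hM_card.trans hw1.symm
  · refine ⟨(1 - M.sum) ::ₘ M, Multiset.forall_mem_cons.2 ⟨⟨?_, sub_pos.2 h⟩, hM_mem⟩,
      by simp, Or.inr (by simp [hM_card])⟩
    exact I.sub_mem h1 (I.multiset_sum_mem _ fun φ hφ => (hM_mem φ hφ).1)

lemma exists_multiset_sum_eq_one_of_isElementary_mem [Nonempty ι] {E : Submodule ℝ (ι → ℝ)} {r : ℕ}
    (hw : ∀ i, 0 < w i) (hr : ∑ i, w i = r) (h1E : 1 ∈ E)
    (hI : ∀ φ ∈ I, ∀ i, ∃ m : ℤ, φ i = m) (h1I : 1 ∈ I)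
    (hEI : ∀ φ ∈ weightedSlice E w, IsElementary E φ → φ ∈ I) :
    ∃ M : Multiset (ι → ℝ), (∀ φ ∈ M, φ ∈ I ∧ 0 < φ) ∧ M.sum = 1 ∧
      (M.card = r ∨ 2 * r + 1 ≤ M.card + Module.finrank ℝ E) := by
  obtain ⟨τ, _, z, a, hind, hz, ha, hsum⟩ :=
    exists_linearIndependent_sum_smul_isElementary hw h1E one_pos
  have hzI (t) : z t ∈ I := hEI _ (hz t).1 (hz t).2
  have hz0 (t) : 0 < z t := (hz t).1.2.1.lt_of_ne' (hz t).2.2.1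
  have hwz (t) : w ⬝ᵥ z t = 1 := (hz t).1.2.2
  have hτ : Fintype.card τ ≤ Module.finrank ℝ E :=
    (LinearIndependent.of_comp E.subtype (v := fun t => (⟨z t, (hz t).1.1⟩ : E))
      hind).fintype_card_le_finrank
  have hfloor : 2 * r ≤ ∑ t, ⌊a t⌋₊ + Fintype.card τ := by
    have := two_mul_sum_le_sum_floor_add_card (fun i => (hw i).le) hI h1I hzI
      (fun t => (hz0 t).le) hwz hsum
    rw [hr] at this
    exact_mod_cast this
  obtain ⟨M, hM, hM1, hcard⟩ :=
    exists_multiset_sum_eq_one_of_sum_smul_eq_one hr h1I hzI hz0 hwz (fun t => (ha t).le) hsum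
  exact ⟨M, hM, hM1, hcard.imp_right fun h => by lia⟩

end Rounding

section AffineEval

variable {k V ι κ : Type*} [Field k] [AddCommGroup V] [Module k V]

/-- Evaluation of affine functionals at a family of points. For the vertices `p` of a polytope,
its range is the space of restrictions of affine functionals to the polytope, coordinatised by the
values at the vertices. -/
def affineEval (p : ι → V) : (V →ᵃ[k] k) →ₗ[k] ι → k where
  toFun u := u ∘ p
  map_add' _ _ := rfl
  map_smul' _ _ := rfl

lemma affineEval_apply (p : ι → V) (u : V →ᵃ[k] k) (i : ι) : affineEval p u i = u (p i) := rfl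

lemma map_funLeft_range_affineEval (p : ι → V) (e : κ → ι) :
    (LinearMap.range (affineEval (k := k) p)).map (LinearMap.funLeft k k e) =
      LinearMap.range (affineEval (p ∘ e)) :=
  (LinearMap.range_comp _ _).symm

lemma finrank_range_affineEval [Finite ι] [Nonempty ι] (p : ι → V) :
    Module.finrank k (LinearMap.range (affineEval (k := k) p)) =
      Module.finrank k (vectorSpan k (Set.range p)) + 1 := by
  obtain ⟨i₀⟩ := ‹Nonempty ι›
  have hmem (i) : p i -ᵥ p i₀ ∈ vectorSpan k (Set.range p) :=
    vsub_mem_vectorSpan k (Set.mem_range_self i) (Set.mem_range_self i₀)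
  let L : (Module.Dual k (vectorSpan k (Set.range p)) × k) →ₗ[k] ι → k :=
    LinearMap.pi fun i =>
      (LinearMap.applyₗ ⟨p i -ᵥ p i₀, hmem i⟩).coprod (LinearMap.id (R := k) (M := k))
  have hL (f c i) : L (f, c) i = f ⟨p i -ᵥ p i₀, hmem i⟩ + c := rfl
  have hL_inj : Function.Injective L := by
    rw [injective_iff_map_eq_zero]
    rintro ⟨f, c⟩ hfc
    obtain ⟨g, rfl⟩ := f.exists_extend
    have hg_eq (i) : g (p i -ᵥ p i₀) + c = 0 := congrFun hfc i
    have hc : c = 0 := by simpa using hg_eq i₀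
    have hg : vectorSpan k (Set.range p) ≤ LinearMap.ker g := by
      rw [vectorSpan_range_eq_span_range_vsub_right k p i₀, Submodule.span_le]
      rintro _ ⟨i, rfl⟩
      exact (add_zero _).symm.trans (hc ▸ hg_eq i)
    have hf : g ∘ₗ Submodule.subtype _ = 0 := LinearMap.ext fun x => hg x.2
    rw [hf, hc, Prod.mk_zero_zero]
  have hL_range : LinearMap.range L = LinearMap.range (affineEval (k := k) p) := by
    apply le_antisymm
    · rintro _ ⟨⟨f, c⟩, rfl⟩
      obtain ⟨g, rfl⟩ := f.exists_extend
      refine ⟨g.toAffineMap + AffineMap.const k V (c - g (p i₀)), funext fun i => ?_⟩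
      simp only [affineEval_apply, hL, AffineMap.coe_add, Pi.add_apply, LinearMap.coe_toAffineMap,
        AffineMap.const_apply, LinearMap.comp_apply, Submodule.subtype_apply, vsub_eq_sub, map_sub]
      ring
    · rintro _ ⟨u, rfl⟩
      refine ⟨(u.linear ∘ₗ Submodule.subtype _, u (p i₀)), funext fun i => ?_⟩
      rw [hL, LinearMap.comp_apply, Submodule.subtype_apply, AffineMap.linearMap_vsub,
        vsub_eq_sub, sub_add_cancel, affineEval_apply]
  rw [← hL_range, LinearMap.finrank_range_of_inj hL_inj, Module.finrank_prod,
    Subspace.dual_finrank_eq, Module.finrank_self]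

end AffineEval

section ConvexHullRange

variable {V ι : Type*} [AddCommGroup V] [Module ℝ V] {p : ι → V}

lemma dotProduct_affineEval [Fintype ι] {w : ι → ℝ} (hw : ∑ i, w i = 1) (u : V →ᵃ[ℝ] ℝ) :
    w ⬝ᵥ affineEval p u = u (∑ i, w i • p i) := by
  rw [← Finset.affineCombination_eq_linear_combination _ p w hw,
    Finset.map_affineCombination _ _ _ hw, Finset.affineCombination_eq_linear_combination _ _ w hw]
  rfl

lemma mem_convexHull_range_iff [Fintype ι] {x : V} :
    x ∈ convexHull ℝ (Set.range p) ↔ ∃ w ∈ stdSimplex ℝ ι, ∑ i, w i • p i = x := by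
  classical
  have hrange : Set.range p =
      Fintype.linearCombination ℝ p '' Set.range fun i => Pi.single i (1 : ℝ) := by
    rw [← Set.range_comp]
    exact congrArg Set.range (funext fun i => by simp [Fintype.linearCombination_apply_single])
  rw [hrange, ← LinearMap.image_convexHull, convexHull_rangle_single_eq_stdSimplex]
  rfl

lemma convexHull_range_inter_zero_eq [Finite ι] {u : V →ᵃ[ℝ] ℝ} (hu : 0 ≤ affineEval p u) :
    {y ∈ convexHull ℝ (Set.range p) | u y = 0} = convexHull ℝ (p '' {i | u (p i) = 0}) := by
  classical
  have := Fintype.ofFinite ι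
  apply subset_antisymm
  · rintro y ⟨hy, hy0⟩
    obtain ⟨w, ⟨hw0, hw1⟩, rfl⟩ := mem_convexHull_range_iff.1 hy
    rw [← dotProduct_affineEval hw1] at hy0
    have hzero (i) (hi : w i ≠ 0) : u (p i) = 0 :=
      (mul_eq_zero.1 ((Finset.sum_eq_zero_iff_of_nonneg fun i _ => mul_nonneg (hw0 i) (hu i)).1 hy0
        i (Finset.mem_univ i))).resolve_left hi
    rw [← Finset.sum_filter_of_ne (p := fun i => u (p i) = 0) fun i _ hi =>
      hzero i (smul_ne_zero_iff.1 hi).1]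
    refine (convex_convexHull ℝ _).sum_mem (fun i _ => hw0 i) ?_ fun i hi =>
      subset_convexHull ℝ _ ⟨i, (Finset.mem_filter.1 hi).2, rfl⟩
    rw [Finset.sum_filter_of_ne fun i _ hi => hzero i hi, hw1]
  · refine convexHull_min ?_ ((convex_convexHull ℝ _).inter
      ((convex_singleton (0 : ℝ)).affine_preimage u))
    rintro _ ⟨i, hi, rfl⟩
    exact ⟨subset_convexHull ℝ _ (Set.mem_range_self i), hi⟩

end ConvexHullRange

section IntrinsicInterior

variable {V ι : Type*} [NormedAddCommGroup V] [NormedSpace ℝ V]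

lemma exists_one_lt_lineMap_mem_of_mem_intrinsicInterior {s : Set V} {x y : V}
    (hx : x ∈ intrinsicInterior ℝ s) (hy : y ∈ s) :
    ∃ t : ℝ, 1 < t ∧ AffineMap.lineMap y x t ∈ s := by
  obtain ⟨x', hx', rfl⟩ := mem_intrinsicInterior.1 hx
  let γ (t : ℝ) : affineSpan ℝ s :=
    ⟨AffineMap.lineMap y x' t, AffineMap.lineMap_mem t (subset_affineSpan ℝ s hy) x'.2⟩
  have hγ : Continuous γ := AffineMap.lineMap_continuous.subtype_mk _
  have hγ1 : γ 1 = x' := Subtype.ext (AffineMap.lineMap_apply_one _ _)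
  have hev : ∀ᶠ t in nhds (1 : ℝ), (γ t : V) ∈ s :=
    (hγ.continuousAt.eventually_mem (hγ1 ▸ isOpen_interior.mem_nhds hx')).mono
      fun _ ht => Set.mem_preimage.1 (interior_subset ht)
  obtain ⟨t, hts, ht⟩ := ((hev.filter_mono nhdsWithin_le_nhds).and
    (self_mem_nhdsWithin : Set.Ioi (1 : ℝ) ∈ nhdsWithin 1 (Set.Ioi 1))).exists
  exact ⟨t, ht, hts⟩

lemma exists_pos_weights_of_mem_intrinsicInterior [Fintype ι] [Nonempty ι] {p : ι → V} {x : V}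
    (hx : x ∈ intrinsicInterior ℝ (convexHull ℝ (Set.range p))) :
    ∃ w : ι → ℝ, (∀ i, 0 < w i) ∧ ∑ i, w i = 1 ∧ ∑ i, w i • p i = x := by
  have hcard : (0 : ℝ) < Fintype.card ι := by exact_mod_cast Fintype.card_pos
  set c : ℝ := (Fintype.card ι : ℝ)⁻¹ with hc
  have hc0 : 0 < c := inv_pos.2 hcard
  have hc1 : ∑ _i : ι, c = 1 := by simp [hc, hcard.ne']
  set y := ∑ i, c • p i with hy
  have hy_mem : y ∈ convexHull ℝ (Set.range p) :=
    mem_convexHull_range_iff.2 ⟨fun _ => c, ⟨fun _ => hc0.le, hc1⟩, rfl⟩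
  obtain ⟨t, ht, hmem⟩ := exists_one_lt_lineMap_mem_of_mem_intrinsicInterior hx hy_mem
  obtain ⟨v, ⟨hv0, hv1⟩, hv⟩ := mem_convexHull_range_iff.1 hmem
  have ht0 : 0 < t := one_pos.trans ht
  refine ⟨fun i => t⁻¹ * v i + (1 - t⁻¹) * c, fun i => ?_, ?_, ?_⟩
  · exact add_pos_of_nonneg_of_pos (mul_nonneg (inv_nonneg.2 ht0.le) (hv0 i))
      (mul_pos (sub_pos.2 (inv_lt_one_of_one_lt₀ ht)) hc0)
  · rw [Finset.sum_add_distrib, ← Finset.mul_sum, ← Finset.mul_sum, hv1, hc1]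
    ring
  · simp_rw [add_smul, mul_smul, Finset.sum_add_distrib]
    rw [← Finset.smul_sum, ← Finset.smul_sum, hv, ← hy, AffineMap.lineMap_apply_module, smul_add,
      smul_smul, smul_smul, inv_mul_cancel₀ ht0.ne', mul_sub, inv_mul_cancel₀ ht0.ne']
    module

end IntrinsicInterior

section Facet

variable {N : ℕ} {ι : Type*} {p : ι → Fin N → ℝ} {u : (Fin N → ℝ) →ᵃ[ℝ] ℝ}

lemma polyDim_convexHull (s : Set (Fin N → ℝ)) :
    polyDim (convexHull ℝ s) = Module.finrank ℝ (vectorSpan ℝ s) := by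
  rw [polyDim, affineSpan_convexHull, direction_affineSpan]

lemma direction_affineSpan_smul {c : ℝ} (hc : c ≠ 0) (P : Set (Fin N → ℝ)) :
    (affineSpan ℝ (c • P)).direction = (affineSpan ℝ P).direction := by
  rw [← AffineSubspace.smul_span, AffineSubspace.direction_smul hc]

lemma polyDim_convexHull_image_zeros_add_one [Finite ι] [Nonempty ι]
    (hu : IsElementary (LinearMap.range (affineEval p)) (affineEval p u))
    (hzero : ∃ i, u (p i) = 0) :
    polyDim (convexHull ℝ (p '' {i | u (p i) = 0})) + 1 = polyDim (convexHull ℝ (Set.range p)) := by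
  obtain ⟨i₀, hi₀⟩ := hzero
  have : Nonempty {i // affineEval p u i = 0} := ⟨i₀, hi₀⟩
  have hrange : Set.range (p ∘ ((↑) : {i // affineEval p u i = 0} → ι)) =
      p '' {i | u (p i) = 0} := by rw [Set.range_comp, Subtype.range_coe_subtype]; rfl
  have := hu.finrank_map_funLeft_add_one
  rw [map_funLeft_range_affineEval, finrank_range_affineEval, finrank_range_affineEval,
    hrange] at this
  rw [polyDim_convexHull, polyDim_convexHull]
  exact Nat.succ_injective this

lemma exists_zero_of_isElementary_affineEval [Finite ι] [Nonempty ι]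
    (hu : IsElementary (LinearMap.range (affineEval p)) (affineEval p u))
    (hdim : 0 < polyDim (convexHull ℝ (Set.range p))) : ∃ i, u (p i) = 0 := by
  by_contra! hne
  have : IsEmpty {i // affineEval p u i = 0} := ⟨fun i => hne i i.2⟩
  have := hu.finrank_map_funLeft_add_one
  rw [finrank_range_affineEval, Module.finrank_zero_of_subsingleton] at this
  rw [polyDim_convexHull] at hdim
  lia

lemma isFacet_zeros_of_isElementary_affineEval [Finite ι] [Nonempty ι]
    (hu : IsElementary (LinearMap.range (affineEval p)) (affineEval p u))
    (hu0 : 0 ≤ affineEval p u) (hzero : ∃ i, u (p i) = 0) :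
    IsFacet (convexHull ℝ (Set.range p)) {y ∈ convexHull ℝ (Set.range p) | u y = 0} := by
  obtain ⟨i₀, hi₀⟩ := hzero
  have hpi₀ : p i₀ ∈ convexHull ℝ (Set.range p) := subset_convexHull ℝ _ (Set.mem_range_self i₀)
  have hnonneg : ∀ y ∈ convexHull ℝ (Set.range p), 0 ≤ u y :=
    convexHull_min (Set.range_subset_iff.2 hu0) ((convex_Ici (0 : ℝ)).affine_preimage u)
  refine ⟨fun _ => ⟨-LinearMap.toContinuousLinearMap u.linear, ?_⟩, ⟨p i₀, hpi₀, hi₀⟩, ?_⟩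
  · have hlin (y z) : (-LinearMap.toContinuousLinearMap u.linear) z ≤
        (-LinearMap.toContinuousLinearMap u.linear) y ↔ u y ≤ u z := by
      have := u.linearMap_vsub z y
      simp only [vsub_eq_sub, map_sub] at this
      simp only [neg_apply, LinearMap.coe_toContinuousLinearMap', neg_le_neg_iff]
      constructor <;> intro h <;> linarith
    ext y
    simp only [Set.mem_ofPred_eq, hlin]
    exact and_congr_right fun hy => ⟨fun h0 z hz => h0 ▸ hnonneg z hz,
      fun h => (hi₀ ▸ h (p i₀) hpi₀).antisymm (hnonneg y hy)⟩
  · rw [convexHull_range_inter_zero_eq hu0]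
    exact polyDim_convexHull_image_zeros_add_one hu ⟨i₀, hi₀⟩

end Facet

section Integral

variable {N : ℕ} {x y : Fin N → ℝ} {P : Set (Fin N → ℝ)} {u : (Fin N → ℝ) →ᵃ[ℝ] ℝ}

lemma IsLatticePt.add (hx : IsLatticePt x) (hy : IsLatticePt y) : IsLatticePt (x + y) := fun i => by
  obtain ⟨a, ha⟩ := hx i
  obtain ⟨b, hb⟩ := hy i
  exact ⟨a + b, by simp [ha, hb]⟩

lemma IsLatticePt.sub (hx : IsLatticePt x) (hy : IsLatticePt y) : IsLatticePt (x - y) := fun i => by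
  obtain ⟨a, ha⟩ := hx i
  obtain ⟨b, hb⟩ := hy i
  exact ⟨a - b, by simp [ha, hb]⟩

/-- The group of affine functionals that are integral on `P`. -/
def integralFunctionals (P : Set (Fin N → ℝ)) : AddSubgroup ((Fin N → ℝ) →ᵃ[ℝ] ℝ) where
  carrier := {u | IsIntegralOn P u}
  add_mem' hu hv y hy hyl := by
    obtain ⟨a, ha⟩ := hu y hy hyl
    obtain ⟨b, hb⟩ := hv y hy hyl
    exact ⟨a + b, by simp [ha, hb]⟩
  zero_mem' _ _ _ := ⟨0, by simp⟩
  neg_mem' hu y hy hyl := by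
    obtain ⟨a, ha⟩ := hu y hy hyl
    exact ⟨-a, by simp [ha]⟩

lemma isIntegralOn_const {c : ℤ} : IsIntegralOn P (AffineMap.const ℝ _ (c : ℝ)) :=
  fun _ _ _ => ⟨c, rfl⟩

lemma isIntegralOn_convexHull_iff : IsIntegralOn (convexHull ℝ P) u ↔ IsIntegralOn P u := by
  rw [IsIntegralOn, affineSpan_convexHull, IsIntegralOn]

end Integral

section Reflexive

variable {N : ℕ} {ι : Type*} {p : ι → Fin N → ℝ}

-- A facet functional of a reflexive polytope is the lattice distance to its facet, up to a factor.
lemma exists_isIntegralOn_affineEval_eq_smul [Fintype ι] [Nonempty ι] {x₀ : Fin N → ℝ}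
    {w φ : ι → ℝ}
    (hx₀ : x₀ ∈ affineSpan ℝ (Set.range p)) (hx₀l : IsLatticePt x₀)
    (hfacet : ∀ F, IsFacet (convexHull ℝ (Set.range p)) F →
      ∃ u : (Fin N → ℝ) →ᵃ[ℝ] ℝ, IsIntegralOn (convexHull ℝ (Set.range p)) u ∧
        ∀ f ∈ F, u f = u x₀ + 1)
    (hdim : 0 < polyDim (convexHull ℝ (Set.range p)))
    (hw : ∑ i, w i = 1) (hwx₀ : ∑ i, w i • p i = x₀)
    (hφ : IsElementary (LinearMap.range (affineEval p)) φ) (hφ0 : 0 ≤ φ) :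
    ∃ z : (Fin N → ℝ) →ᵃ[ℝ] ℝ, IsIntegralOn (Set.range p) z ∧
      affineEval p z = (w ⬝ᵥ φ)⁻¹ • φ := by
  obtain ⟨⟨g, rfl⟩, -, hmin⟩ := id hφ
  obtain ⟨u, hu, huF⟩ := hfacet _ <| isFacet_zeros_of_isElementary_affineEval hφ hφ0
    (exists_zero_of_isElementary_affineEval hφ hdim)
  rw [isIntegralOn_convexHull_iff] at hu
  obtain ⟨m, hm⟩ := hu x₀ hx₀ hx₀l
  set z := AffineMap.const ℝ (Fin N → ℝ) ((m + 1 : ℤ) : ℝ) - u with hz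
  have hz_apply (y) : z y = u x₀ + 1 - u y := by simp [hz, hm]
  obtain ⟨c, hc⟩ := hmin (affineEval p z) ⟨z, rfl⟩ fun i hi => by
    rw [affineEval_apply, hz_apply, huF (p i) ⟨subset_convexHull ℝ _ (Set.mem_range_self i), hi⟩,
      sub_self]
  refine ⟨z, (integralFunctionals _).sub_mem isIntegralOn_const hu, ?_⟩
  have hcw : c * (w ⬝ᵥ affineEval p g) = 1 := by
    rw [← smul_eq_mul, ← dotProduct_smul, ← hc, dotProduct_affineEval hw, hwx₀, hz_apply]
    ring
  rw [hc, eq_inv_of_mul_eq_one_left hcw]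

lemma exists_isIntegralOn_smul_affineEval_eq {r : ℝ} (hr : r ≠ 0) (hp : ∀ i, IsLatticePt (p i))
    {x₀ : Fin N → ℝ} (hx₀ : x₀ ∈ affineSpan ℝ (r • Set.range p)) (hx₀l : IsLatticePt x₀)
    {z : (Fin N → ℝ) →ᵃ[ℝ] ℝ} (hz : IsIntegralOn (r • Set.range p) z)
    (hzero : ∃ i, z (r • p i) = 0) :
    ∃ u : (Fin N → ℝ) →ᵃ[ℝ] ℝ, IsIntegralOn (Set.range p) u ∧
      r • affineEval p u = affineEval (r • p) z := by
  obtain ⟨i₀, hi₀⟩ := hzero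
  refine ⟨z.linear.toAffineMap - AffineMap.const ℝ _ (z.linear (p i₀)), fun y hy hyl => ?_,
    funext fun i => ?_⟩
  · have hmem : x₀ + (y - p i₀) ∈ affineSpan ℝ (r • Set.range p) := by
      rw [add_comm]
      refine AffineSubspace.vadd_mem_of_mem_direction ?_ hx₀
      rw [direction_affineSpan_smul hr]
      exact AffineSubspace.vsub_mem_direction hy
        (subset_affineSpan ℝ _ (Set.mem_range_self i₀))
    obtain ⟨a, ha⟩ := hz _ hmem (hx₀l.add (hyl.sub (hp i₀)))
    obtain ⟨b, hb⟩ := hz _ hx₀ hx₀l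
    refine ⟨a - b, ?_⟩
    have := z.linearMap_vsub (x₀ + (y - p i₀)) x₀
    simp only [vsub_eq_sub, add_sub_cancel_left, map_sub] at this
    simp [this, ha, hb]
  · have := z.linearMap_vsub (r • p i) (r • p i₀)
    rw [hi₀, vsub_eq_sub, vsub_eq_sub, sub_zero, ← smul_sub, map_smul, map_sub] at this
    simpa [affineEval_apply] using this

lemma one_mem_map_affineEval :
    1 ∈ (integralFunctionals (Set.range p)).map (affineEval p).toAddMonoidHom :=
  ⟨AffineMap.const ℝ _ ((1 : ℤ) : ℝ), isIntegralOn_const, by ext; simp [affineEval_apply]⟩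

lemma mem_map_affineEval_of_mem_weightedSlice [Fintype ι] [Nonempty ι] {r : ℝ} {x₀ : Fin N → ℝ}
    {w φ : ι → ℝ} (hr : 0 < r) (hp : ∀ i, IsLatticePt (p i))
    (hx₀ : x₀ ∈ affineSpan ℝ (Set.range (r • p))) (hx₀l : IsLatticePt x₀)
    (hfacet : ∀ F, IsFacet (convexHull ℝ (Set.range (r • p))) F →
      ∃ u : (Fin N → ℝ) →ᵃ[ℝ] ℝ, IsIntegralOn (convexHull ℝ (Set.range (r • p))) u ∧
        ∀ f ∈ F, u f = u x₀ + 1)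
    (hdim : 0 < polyDim (convexHull ℝ (Set.range (r • p))))
    (hw : ∑ i, w i = 1) (hwx₀ : ∑ i, w i • (r • p) i = x₀)
    (hφ : φ ∈ weightedSlice (LinearMap.range (affineEval (r • p))) (r • w))
    (hφE : IsElementary (LinearMap.range (affineEval (r • p))) φ) :
    φ ∈ (integralFunctionals (Set.range p)).map (affineEval p).toAddMonoidHom := by
  obtain ⟨z, hz, hzφ⟩ :=
    exists_isIntegralOn_affineEval_eq_smul hx₀ hx₀l hfacet hdim hw hwx₀ hφE hφ.2.1
  have hwφ : (w ⬝ᵥ φ)⁻¹ = r := by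
    have : r * (w ⬝ᵥ φ) = 1 := by simpa only [smul_dotProduct, smul_eq_mul] using hφ.2.2
    exact inv_eq_of_mul_eq_one_left this
  rw [hwφ] at hzφ
  obtain ⟨g, rfl⟩ := hφE.1
  obtain ⟨i, hi⟩ := exists_zero_of_isElementary_affineEval hφE hdim
  have hrange : Set.range (r • p) = r • Set.range p := Set.range_smul r p
  rw [hrange] at hx₀ hz
  obtain ⟨u, hu, huz⟩ := exists_isIntegralOn_smul_affineEval_eq hr.ne' hp hx₀ hx₀l hz
    ⟨i, (congrFun hzφ i).trans (mul_eq_zero_of_right r hi)⟩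
  exact ⟨u, hu, smul_right_injective _ hr.ne' (huz.trans hzφ)⟩

lemma exists_multiset_sum_eq_one_of_isReflexivePolytope [Finite ι] [Nonempty ι]
    (hp : ∀ i, IsLatticePt (p i)) {r : ℕ} (hr : 0 < r)
    (hrefl : IsReflexivePolytope ((r : ℝ) • convexHull ℝ (Set.range p)))
    (hdim : 0 < polyDim (convexHull ℝ (Set.range p))) :
    ∃ M : Multiset (ι → ℝ),
      (∀ φ ∈ M, φ ∈ (integralFunctionals (Set.range p)).map (affineEval p).toAddMonoidHom ∧
        0 < φ) ∧
      M.sum = 1 ∧ (M.card = r ∨ 2 * r ≤ M.card + polyDim (convexHull ℝ (Set.range p))) := by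
  have := Fintype.ofFinite ι
  have hr0 : (0 : ℝ) < r := by exact_mod_cast hr
  have hrange : Set.range ((r : ℝ) • p) = (r : ℝ) • Set.range p := Set.range_smul (r : ℝ) p
  have hdim_eq : polyDim (convexHull ℝ (Set.range ((r : ℝ) • p))) =
      polyDim (convexHull ℝ (Set.range p)) := by
    rw [hrange, convexHull_smul, polyDim, direction_affineSpan_smul hr0.ne', polyDim]
  rw [← convexHull_smul, ← hrange] at hrefl
  obtain ⟨x₀, hx₀, hx₀l, hfacet⟩ := hrefl
  have hx₀' : x₀ ∈ affineSpan ℝ (Set.range ((r : ℝ) • p)) :=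
    convexHull_subset_affineSpan _ (intrinsicInterior_subset hx₀)
  obtain ⟨w, hw0, hw1, hwx₀⟩ := exists_pos_weights_of_mem_intrinsicInterior hx₀
  obtain ⟨M, hM, hM1, hcard⟩ := exists_multiset_sum_eq_one_of_isElementary_mem
    (E := LinearMap.range (affineEval ((r : ℝ) • p))) (w := (r : ℝ) • w) (r := r)
    (I := (integralFunctionals (Set.range p)).map (affineEval p).toAddMonoidHom)
    (fun i => mul_pos hr0 (hw0 i)) (by simp [← Finset.mul_sum, hw1])
    ⟨AffineMap.const ℝ _ 1, rfl⟩
    (by rintro _ ⟨u, hu, rfl⟩ i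
        exact hu _ (subset_affineSpan ℝ _ (Set.mem_range_self i)) (hp i))
    one_mem_map_affineEval
    (fun φ hφ hφE => mem_map_affineEval_of_mem_weightedSlice hr0 hp hx₀' hx₀l hfacet
      (hdim_eq ▸ hdim) hw1 hwx₀ hφ hφE)
  refine ⟨M, hM, hM1, hcard.imp_right fun h => ?_⟩
  rw [finrank_range_affineEval, ← polyDim_convexHull, hdim_eq] at h
  lia

lemma polyCodeg_le_of_isReflexivePolytope {P : Set (Fin N → ℝ)} {r : ℕ} (hr : 0 < r)
    (hrefl : IsReflexivePolytope ((r : ℝ) • P)) : polyCodeg P ≤ r := by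
  obtain ⟨x₀, hx₀, hx₀l, -⟩ := hrefl
  exact Nat.sInf_le ⟨hr, fun h => h x₀ hx₀ hx₀l⟩

lemma exists_multiset_sum_eq_one_of_isGorenstein [Finite ι] [Nonempty ι]
    (hp : ∀ i, IsLatticePt (p i)) (hGor : IsGorenstein (convexHull ℝ (Set.range p))) :
    ∃ M : Multiset (ι → ℝ),
      (∀ φ ∈ M, φ ∈ (integralFunctionals (Set.range p)).map (affineEval p).toAddMonoidHom ∧
        0 < φ) ∧
      M.sum = 1 ∧ polyDim (convexHull ℝ (Set.range p)) + 1 ≤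
        M.card + (2 * polyDeg (convexHull ℝ (Set.range p)) - 1) := by
  obtain ⟨r, hr, hrefl⟩ := hGor
  rcases (polyDim (convexHull ℝ (Set.range p))).eq_zero_or_pos with hdim | hdim
  · refine ⟨{1}, fun φ hφ => ?_, Multiset.sum_singleton 1, by simp [hdim]⟩
    rw [Multiset.mem_singleton.1 hφ]
    exact ⟨one_mem_map_affineEval, one_pos⟩
  · obtain ⟨M, hM, hM1, hcard⟩ :=
      exists_multiset_sum_eq_one_of_isReflexivePolytope hp hr hrefl hdim
    have hcodeg := polyCodeg_le_of_isReflexivePolytope hr hrefl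
    refine ⟨M, hM, hM1, ?_⟩
    rw [polyDeg]
    rcases hcard with h | h <;> lia

end Reflexive

section LatticeCoordinates

variable {N : ℕ}

lemma mem_span_basisFun_iff {x : Fin N → ℝ} :
    x ∈ Submodule.span ℤ (Set.range (Pi.basisFun ℝ (Fin N))) ↔ IsLatticePt x := by
  rw [Module.Basis.mem_span_iff_repr_mem]
  simp only [Pi.basisFun_repr, IsLatticePt, Set.mem_range, eq_intCast, eq_comm]

lemma isLatticePt_linearCombination {k : ℕ} {q : Fin k → Fin N → ℝ}
    {t : Fin k → ℝ}
    (hq : ∀ j, IsLatticePt (q j)) (ht : IsLatticePt t) :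
    IsLatticePt (Fintype.linearCombination ℝ q t) := by
  choose m hm using ht
  obtain rfl : t = fun j => (m j : ℝ) := funext hm
  simp only [Fintype.linearCombination_apply, Int.cast_smul_eq_zsmul]
  rw [← mem_span_basisFun_iff]
  exact Submodule.sum_mem _ fun j _ =>
    Submodule.smul_mem _ _ (mem_span_basisFun_iff.2 (hq j))

lemma exists_linearIndependent_span_int_eq (K : Submodule ℤ (Fin N → ℝ))
    (hK : ∀ x ∈ K, IsLatticePt x) :
    ∃ (n : ℕ) (b : Fin n → Fin N → ℝ), LinearIndependent ℝ b ∧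
      Submodule.span ℤ (Set.range b) = K := by
  have hdisc : DiscreteTopology (Submodule.span ℤ (Set.range (Pi.basisFun ℝ (Fin N)))) :=
    inferInstance
  have : DiscreteTopology K := .of_subset hdisc fun x hx => mem_span_basisFun_iff.2 (hK x hx)
  let b := K.subtype ∘ Module.finBasis ℤ K
  have hspan : Submodule.span ℤ (Set.range b) = K := by
    rw [Set.range_comp, Submodule.span_image, Module.Basis.span_eq, Submodule.map_subtype_top]
  refine ⟨_, b, linearIndependent_iff_card_eq_finrank_span.2 ?_, hspan⟩
  rw [Real.finrank_eq_int_finrank_of_discrete (s := Set.range b) (by rwa [hspan]), Set.finrank,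
    hspan, Fintype.card_fin]

lemma exists_lattice_coordinates (K : Submodule ℤ (Fin N → ℝ)) (hK : ∀ x ∈ K, IsLatticePt x) :
    ∃ (n : ℕ) (B : (Fin n → ℝ) →ₗ[ℝ] Fin N → ℝ) (c : (Fin N → ℝ) →ₗ[ℝ] Fin n → ℝ),
      c ∘ₗ B = LinearMap.id ∧ (∀ a, IsLatticePt a → B a ∈ K) ∧
      ∀ x ∈ K, IsLatticePt (c x) ∧ B (c x) = x := by
  obtain ⟨n, b, hb, rfl⟩ := exists_linearIndependent_span_int_eq K hK
  obtain ⟨c, hc⟩ := (Fintype.linearCombination ℝ b).exists_leftInverse_of_injective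
    (LinearMap.ker_eq_bot.2 hb.fintypeLinearCombination_injective)
  have hB (m : Fin n → ℤ) : Fintype.linearCombination ℝ b (fun j => m j) = ∑ j, m j • b j := by
    simp only [Fintype.linearCombination_apply, Int.cast_smul_eq_zsmul]
  refine ⟨n, Fintype.linearCombination ℝ b, c, hc, fun a ha => ?_, fun x hx => ?_⟩
  · choose m hm using ha
    obtain rfl : a = fun j => (m j : ℝ) := funext hm
    rw [hB]
    exact Submodule.sum_mem _ fun j _ =>
      Submodule.smul_mem _ _ (Submodule.subset_span (Set.mem_range_self j))
  · obtain ⟨m, rfl⟩ := (Submodule.mem_span_range_iff_exists_fun ℤ).1 hx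
    have hcm : c (∑ j, m j • b j) = fun j => (m j : ℝ) := by
      rw [← hB]
      exact LinearMap.congr_fun hc _
    exact ⟨fun j => ⟨m j, congrFun hcm j⟩, by rw [hcm, hB]⟩

end LatticeCoordinates

section Cayley

variable {N n k : ℕ}

/-- Concatenation of vectors as a linear equivalence `ℝ^n × ℝ^k ≃ ℝ^(n+k)`. -/
def appendLinearEquiv (n k : ℕ) : ((Fin n → ℝ) × (Fin k → ℝ)) ≃ₗ[ℝ] (Fin (n + k) → ℝ) where
  __ := Fin.appendEquiv n k
  map_add' x y := by
    refine funext fun i => Fin.addCases (fun i => ?_) (fun i => ?_) i <;> simp [Fin.appendEquiv]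
  map_smul' c x := by
    refine funext fun i => Fin.addCases (fun i => ?_) (fun i => ?_) i <;> simp [Fin.appendEquiv]

lemma appendLinearEquiv_apply (a : Fin n → ℝ) (t : Fin k → ℝ) :
    appendLinearEquiv n k (a, t) = Fin.append a t := rfl

lemma isLatticePt_append_iff {a : Fin n → ℝ} {t : Fin k → ℝ} :
    IsLatticePt (Fin.append a t) ↔ IsLatticePt a ∧ IsLatticePt t := by
  simp [IsLatticePt, Fin.forall_fin_add]

lemma cayley_convexHull (S : Fin k → Set (Fin n → ℝ)) :
    cayley (fun i => convexHull ℝ (S i)) =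
      convexHull ℝ (⋃ i, (fun x => Fin.append x (Pi.single i (1 : ℝ))) '' S i) := by
  have himage (i : Fin k) : (fun x => Fin.append x (Pi.single i (1 : ℝ))) '' convexHull ℝ (S i) =
      convexHull ℝ ((fun x => Fin.append x (Pi.single i (1 : ℝ))) '' S i) :=
    AffineMap.image_convexHull ((appendLinearEquiv n k).toLinearMap.toAffineMap.comp
      ((AffineMap.id ℝ _).prod (AffineMap.const ℝ _ (Pi.single i (1 : ℝ))))) (S i)
  simp_rw [cayley, himage]
  refine (convexHull_min (Set.iUnion_subset fun i => convexHull_mono ?_)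
    (convex_convexHull ℝ _)).antisymm (convexHull_mono (Set.iUnion_mono fun i => ?_))
  · exact Set.subset_iUnion (fun i => (fun x => Fin.append x (Pi.single i (1 : ℝ))) '' S i) i
  · exact subset_convexHull ℝ _

lemma image_append_eq_iUnion {V : Type*} {S : Set V} {a : V → Fin n → ℝ} {U : V → Fin k → ℝ}
    (hU : ∀ v ∈ S, ∃ j, U v = Pi.single j 1) :
    (fun v => Fin.append (a v) (U v)) '' S =
      ⋃ j, (fun x => Fin.append x (Pi.single j (1 : ℝ))) ''
        (a '' {v ∈ S | U v = Pi.single j 1}) := by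
  ext x
  simp only [Set.mem_iUnion, Set.image_image]
  constructor
  · rintro ⟨v, hv, rfl⟩
    obtain ⟨j, hj⟩ := hU v hv
    exact ⟨j, v, ⟨hv, hj⟩, congrArg (Fin.append (a v)) hj.symm⟩
  · rintro ⟨j, v, ⟨hv, hj⟩, rfl⟩
    exact ⟨v, hv, congrArg (Fin.append (a v)) hj⟩

lemma isLatticePolytope_convexHull {S : Set (Fin N → ℝ)} (hS : S.Finite) (hne : S.Nonempty)
    (hl : ∀ v ∈ S, IsLatticePt v) : IsLatticePolytope (convexHull ℝ S) :=
  ⟨hS.toFinset, hS.toFinset_nonempty.2 hne, fun v hv => hl v (hS.mem_toFinset.1 hv),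
    by rw [hS.coe_toFinset]⟩

lemma latticeIso_convexHull_image {S : Set (Fin N → ℝ)} (f : (Fin N → ℝ) →ᵃ[ℝ] Fin n → ℝ)
    (g : (Fin n → ℝ) →ᵃ[ℝ] Fin N → ℝ) (hgf : ∀ x ∈ S, g (f x) = x)
    (hf : ∀ x ∈ affineSpan ℝ S, IsLatticePt x → IsLatticePt (f x))
    (hg : ∀ y, IsLatticePt y → IsLatticePt (g y)) :
    LatticeIso (convexHull ℝ S) (convexHull ℝ (f '' S)) := by
  have hgf' : ∀ x ∈ affineSpan ℝ S, g (f x) = x :=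
    AffineMap.eqOn_affineSpan (f := g.comp f) (g := AffineMap.id ℝ _) hgf
  refine ⟨f, g, f.image_convexHull S, ?_, ?_, ?_, ?_, fun y _ => hg y⟩
  · rw [g.image_convexHull, Set.image_image, Set.image_congr hgf, Set.image_id']
  · rwa [affineSpan_convexHull]
  · rw [affineSpan_convexHull, ← AffineSubspace.map_span]
    rintro _ ⟨x, hx, rfl⟩
    rw [hgf' x hx]
  · rwa [affineSpan_convexHull]

end Cayley

section Projection

variable {V : Type*} [AddCommGroup V] [Module ℝ V] {k : ℕ} {S : Set V} {U : V →ᵃ[ℝ] Fin k → ℝ}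

lemma finrank_inf_ker_add_le_finrank_vectorSpan_add_one [FiniteDimensional ℝ V]
    (hU : ∀ j, ∃ v ∈ S, U v = Pi.single j 1) :
    Module.finrank ℝ ↥(vectorSpan ℝ S ⊓ LinearMap.ker U.linear) + k ≤
      Module.finrank ℝ (vectorSpan ℝ S) + 1 := by
  have hk : k ≤ Module.finrank ℝ ((vectorSpan ℝ S).map U.linear) + 1 := by
    have hsub : Set.range (fun j : Fin k => Pi.single j (1 : ℝ)) ⊆ U '' S :=
      Set.range_subset_iff.2 hU
    have hind : AffineIndependent ℝ (fun j : Fin k => Pi.single j (1 : ℝ)) :=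
      (Pi.linearIndependent_single_one (Fin k) ℝ).affineIndependent
    rw [AffineMap.map_vectorSpan]
    calc k = Fintype.card (Fin k) := (Fintype.card_fin k).symm
      _ ≤ _ := hind.card_le_finrank_succ
      _ ≤ _ := Nat.succ_le_succ (Submodule.finrank_mono (vectorSpan_mono ℝ hsub))
  have hrank := LinearMap.finrank_range_add_finrank_ker (U.linear.domRestrict (vectorSpan ℝ S))
  rw [LinearMap.range_domRestrict, LinearMap.ker_domRestrict,
    ← Submodule.finrank_map_subtype_eq (vectorSpan ℝ S), Submodule.map_comap_subtype] at hrank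
  lia

/-- The displacement `y - ∑ j, U_j(y) • q j` of a point `y` from the point of the simplex with
vertices `q` that has barycentric coordinates `U y`. -/
noncomputable def displacement (U : V →ᵃ[ℝ] Fin k → ℝ) (q : Fin k → V) : V →ᵃ[ℝ] V :=
  AffineMap.id ℝ V - (Fintype.linearCombination ℝ q).toAffineMap.comp U

lemma displacement_apply (q : Fin k → V) (y : V) :
    displacement U q y = y - Fintype.linearCombination ℝ q (U y) := rfl

lemma displacement_mem {q : Fin k → V} (hq : ∀ j, q j ∈ S ∧ U (q j) = Pi.single j 1)
    (hU : ∀ v ∈ S, ∃ j, U v = Pi.single j 1) {y : V} (hy : y ∈ affineSpan ℝ S) :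
    displacement U q y ∈ vectorSpan ℝ S ⊓ LinearMap.ker U.linear := by
  have hle : affineSpan ℝ S ≤
      (vectorSpan ℝ S ⊓ LinearMap.ker U.linear).toAffineSubspace.comap (displacement U q) := by
    refine affineSpan_le.2 fun v hv => ?_
    obtain ⟨j, hj⟩ := hU v hv
    have hdisp : displacement U q v = v -ᵥ q j := by
      rw [displacement_apply, hj, Fintype.linearCombination_apply_single, one_smul, vsub_eq_sub]
    refine AffineSubspace.mem_comap.2 ?_
    rw [Submodule.mem_toAffineSubspace, hdisp, Submodule.mem_inf, LinearMap.mem_ker,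
      AffineMap.linearMap_vsub, hj, (hq j).2, vsub_self]
    exact ⟨vsub_mem_vectorSpan ℝ hv (hq j).1, rfl⟩
  exact hle hy

end Projection

section CayleyDecomposition

variable {N k : ℕ} {S : Set (Fin N → ℝ)} {U : (Fin N → ℝ) →ᵃ[ℝ] Fin k → ℝ}

lemma exists_displacement_coordinates (hSl : ∀ v ∈ S, IsLatticePt v)
    (hU : ∀ y ∈ affineSpan ℝ S, IsLatticePt y → IsLatticePt (U y))
    (hvert : ∀ v ∈ S, ∃ j, U v = Pi.single j 1) {q : Fin k → Fin N → ℝ}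
    (hq : ∀ j, q j ∈ S ∧ U (q j) = Pi.single j 1) :
    ∃ (n : ℕ) (B : (Fin n → ℝ) →ₗ[ℝ] Fin N → ℝ) (c : (Fin N → ℝ) →ₗ[ℝ] Fin n → ℝ),
      n + k ≤ Module.finrank ℝ (vectorSpan ℝ S) + 1 ∧ (∀ a, IsLatticePt a → IsLatticePt (B a)) ∧
      ∀ y ∈ affineSpan ℝ S, IsLatticePt y →
        IsLatticePt (c (displacement U q y)) ∧ B (c (displacement U q y)) = displacement U q y := by
  let W := vectorSpan ℝ S ⊓ LinearMap.ker U.linear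
  obtain ⟨n, B, c, hcB, hB, hc⟩ := exists_lattice_coordinates
    (Submodule.span ℤ (Set.range (Pi.basisFun ℝ (Fin N))) ⊓ W.restrictScalars ℤ)
    fun x hx => mem_span_basisFun_iff.1 hx.1
  refine ⟨n, B, c, ?_, fun a ha => mem_span_basisFun_iff.1 (hB a ha).1,
    fun y hy hyl => hc _ ⟨?_, ?_⟩⟩
  · have hrange : LinearMap.range B ≤ W := by
      rw [LinearMap.range_eq_map, ← (Pi.basisFun ℝ (Fin n)).span_eq, Submodule.map_span_le]
      rintro _ ⟨j, rfl⟩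
      exact (hB _ (mem_span_basisFun_iff.1 (Submodule.subset_span (Set.mem_range_self j)))).2
    have hn : n ≤ Module.finrank ℝ W := by
      have := Submodule.finrank_mono hrange
      rwa [LinearMap.finrank_range_of_inj
        (Function.LeftInverse.injective (LinearMap.congr_fun hcB)), Module.finrank_fin_fun] at this
    calc n + k ≤ Module.finrank ℝ W + k := Nat.add_le_add_right hn k
      _ ≤ _ := finrank_inf_ker_add_le_finrank_vectorSpan_add_one fun j => ⟨q j, hq j⟩
  · exact mem_span_basisFun_iff.2 <|
      hyl.sub (isLatticePt_linearCombination (fun j => hSl _ (hq j).1) (hU y hy hyl))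
  · exact displacement_mem hq hvert hy

lemma exists_latticeIso_cayley (hS : S.Finite) (hSl : ∀ v ∈ S, IsLatticePt v)
    (hU : ∀ y ∈ affineSpan ℝ S, IsLatticePt y → IsLatticePt (U y))
    (hvert : ∀ v ∈ S, ∃ j, U v = Pi.single j 1) (hsurj : ∀ j, ∃ v ∈ S, U v = Pi.single j 1) :
    ∃ (n : ℕ) (Q : Fin k → Set (Fin n → ℝ)), n + k ≤ polyDim (convexHull ℝ S) + 1 ∧
      (∀ j, IsLatticePolytope (Q j)) ∧ LatticeIso (convexHull ℝ S) (cayley Q) := by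
  choose q hq using hsurj
  obtain ⟨n, B, c, hn, hB, hc⟩ := exists_displacement_coordinates hSl hU hvert hq
  have hc' (v) (hv : v ∈ S) := hc v (subset_affineSpan ℝ S hv) (hSl v hv)
  let a : (Fin N → ℝ) →ᵃ[ℝ] Fin n → ℝ := c.toAffineMap.comp (displacement U q)
  let f : (Fin N → ℝ) →ᵃ[ℝ] Fin (n + k) → ℝ :=
    (appendLinearEquiv n k).toLinearMap.toAffineMap.comp (a.prod U)
  let g : (Fin (n + k) → ℝ) →ₗ[ℝ] Fin N → ℝ :=
    (B.coprod (Fintype.linearCombination ℝ q)) ∘ₗ (appendLinearEquiv n k).symm.toLinearMap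
  have hf (y) : f y = Fin.append (a y) (U y) := rfl
  have hg (x t) : g (Fin.append x t) = B x + Fintype.linearCombination ℝ q t := by
    simp [g, ← appendLinearEquiv_apply]
  have hgf (v) (hv : v ∈ S) : g (f v) = v := by
    rw [hf, hg]
    exact (congrArg (· + _) (hc' v hv).2).trans (sub_add_cancel v _)
  refine ⟨n, fun j => convexHull ℝ (a '' {v ∈ S | U v = Pi.single j 1}),
    (polyDim_convexHull S).symm ▸ hn, fun j => ?_, ?_⟩
  · refine isLatticePolytope_convexHull ((hS.subset (Set.sep_subset _ _)).image a)
      ⟨a (q j), q j, hq j, rfl⟩ ?_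
    rintro _ ⟨v, hv, rfl⟩
    exact (hc' v hv.1).1
  · rw [cayley_convexHull, ← image_append_eq_iUnion hvert]
    refine latticeIso_convexHull_image f g.toAffineMap hgf (fun y hy hyl => ?_) fun y hy => ?_
    · exact isLatticePt_append_iff.2 ⟨(hc y hy hyl).1, hU y hy hyl⟩
    · rw [← Fin.append_castAdd_natAdd (f := y)] at hy ⊢
      obtain ⟨hy₁, hy₂⟩ := isLatticePt_append_iff.1 hy
      rw [LinearMap.coe_toAffineMap, hg]
      exact (hB _ hy₁).add (isLatticePt_linearCombination (fun j => hSl _ (hq j).1) hy₂)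

end CayleyDecomposition

section Main

variable {N : ℕ}

lemma exists_eq_single_one_of_sum_eq_one {ι : Type*} [Fintype ι] [DecidableEq ι] {t : ι → ℝ}
    (ht : ∀ j, ∃ m : ℤ, t j = m) (ht0 : 0 ≤ t) (ht1 : ∑ j, t j = 1) :
    ∃ j, t = Pi.single j 1 := by
  obtain ⟨j, -, hj⟩ := Finset.exists_ne_zero_of_sum_ne_zero (ht1 ▸ one_ne_zero)
  have hj1 : 1 ≤ t j := by
    obtain ⟨m, hm⟩ := ht j
    have hm0 : (0 : ℝ) < m := hm ▸ (ht0 j).lt_of_ne' hj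
    rw [hm]
    exact_mod_cast Int.cast_pos.1 hm0
  have hle : Pi.single j 1 ≤ t := fun i => by
    rcases eq_or_ne i j with rfl | hij
    · rwa [Pi.single_eq_same]
    · rw [Pi.single_eq_of_ne hij]
      exact ht0 i
  refine ⟨j, funext fun i => ?_⟩
  exact ((Finset.sum_eq_sum_iff_of_le fun i _ => hle i).1
    (by rw [ht1, Finset.sum_pi_single']; simp) i (Finset.mem_univ i)).symm

lemma exists_affineMap_of_list_sum_eq_one {ι : Type*} {p : ι → Fin N → ℝ}
    (hp : ∀ i, IsLatticePt (p i)) {L : List (ι → ℝ)}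
    (hL : ∀ φ ∈ L, φ ∈ (integralFunctionals (Set.range p)).map (affineEval p).toAddMonoidHom ∧
      0 < φ) (hL1 : L.sum = 1) :
    ∃ U : (Fin N → ℝ) →ᵃ[ℝ] Fin L.length → ℝ,
      (∀ y ∈ affineSpan ℝ (Set.range p), IsLatticePt y → IsLatticePt (U y)) ∧
      (∀ i, ∃ j, U (p i) = Pi.single j 1) ∧ ∀ j, ∃ i, U (p i) = Pi.single j 1 := by
  have hmem (j : Fin L.length) := hL L[j] (List.getElem_mem j.2)
  choose u hu hup using fun j => (hmem j).1
  have hval (j : Fin L.length) (i) : u j (p i) = L[j] i := congrFun (hup j) i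
  have hsum (i) : ∑ j, u j (p i) = 1 := by
    have hL1' : ∑ j : Fin L.length, L[j] = 1 := (Fin.sum_univ_getElem L).trans hL1
    simpa only [Finset.sum_apply, ← hval, Pi.one_apply] using congrFun hL1' i
  have hnonneg (i j) : 0 ≤ u j (p i) := ((hmem j).2.le i).trans_eq (hval j i).symm
  have hvert (i) : ∃ j, AffineMap.pi u (p i) = Pi.single j 1 :=
    exists_eq_single_one_of_sum_eq_one
      (fun j => hu j _ (subset_affineSpan ℝ _ (Set.mem_range_self i)) (hp i)) (hnonneg i) (hsum i)
  refine ⟨AffineMap.pi u, fun y hy hyl j => hu j y hy hyl, hvert, fun j => ?_⟩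
  obtain ⟨-, i, hi⟩ := Pi.lt_def.1 (hmem j).2
  obtain ⟨j', hj'⟩ := hvert i
  have hne : AffineMap.pi u (p i) j ≠ 0 := (hi.trans_eq (hval j i).symm).ne'
  rw [hj'] at hne
  obtain rfl : j = j' := of_not_not fun hjj' => hne (Pi.single_eq_of_ne hjj' 1)
  exact ⟨i, hj'⟩

theorem stmt10_general {P : Set (Fin N → ℝ)} (hP : IsLatticePolytope P) (hGor : IsGorenstein P) :
    ∃ (n l : ℕ) (Q : Fin l → Set (Fin n → ℝ)), n + l ≤ polyDim P + 1 ∧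
      polyDim P + 1 ≤ l + (2 * polyDeg P - 1) ∧
      (∀ i, IsLatticePolytope (Q i)) ∧ LatticeIso P (cayley Q) := by
  obtain ⟨V, hV, hVl, rfl⟩ := hP
  have : Nonempty V := hV.to_subtype
  have hrange : Set.range ((↑) : V → Fin N → ℝ) = V := Subtype.range_coe
  rw [← hrange] at hGor ⊢
  obtain ⟨M, hM, hM1, hcard⟩ :=
    exists_multiset_sum_eq_one_of_isGorenstein (fun v : V => hVl v v.2) hGor
  obtain ⟨U, hU, hvert, hsurj⟩ := exists_affineMap_of_list_sum_eq_one (L := M.toList)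
    (fun v : V => hVl v v.2) (fun φ hφ => hM φ (Multiset.mem_toList.1 hφ))
    ((Multiset.sum_toList M).trans hM1)
  rw [← Multiset.length_toList] at hcard
  obtain ⟨n, Q, hn, hQ, hiso⟩ := exists_latticeIso_cayley (Set.finite_range _)
    (Set.forall_mem_range.2 fun v : V => hVl v v.2) hU (Set.forall_mem_range.2 hvert)
    fun j => Set.exists_range_iff.2 (hsurj j)
  exact ⟨n, M.toList.length, Q, hn, hcard, hQ, hiso⟩

end Main

/-- A Gorenstein polytope of dimension `d` and degree `s` with `d ≥ 2s` is isomorphic to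
a Cayley polytope of lattice polytopes in `ℝ^n` with `n ≤ 2s - 1`. -/
theorem stmt10 {N d s : ℕ} (P : Set (Fin N → ℝ))
    (hP : IsLatticePolytope P) (hGor : IsGorenstein P)
    (hd : polyDim P = d) (hs : polyDeg P = s) (h : 2 * s ≤ d) :
    ∃ (n l : ℕ) (Q : Fin l → Set (Fin n → ℝ)), n ≤ 2 * s - 1 ∧
      (∀ i, IsLatticePolytope (Q i)) ∧ LatticeIso P (cayley Q) := by
  obtain ⟨n, l, Q, hn, hl, hQ, hiso⟩ := stmt10_general hP hGor
  exact ⟨n, l, Q, by lia, hQ, hiso⟩
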